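/- Let Γ be a conservative relational clone with finite domain D. Then at least one of the following holds: (i) there are distinct a,b ∈ D such that N(a,b,a,b) ∈ Γ; (ii) there are distinct a,b ∈ D such that the ternary relation {(a,a,a),(a,b,b),(b,a,b),(b,b,a)} ∈ Γ; (iii) for some k ≥ 1 there are a₀,…,a_{2k}, b₀,…,b_{2k} ∈ D such that aᵢ ≠ bᵢ for each 0 ≤ i ≤ 2k, N(aᵢ,bᵢ,a_{i+1},b_{i+1}) ∈ Γ for each 0 ≤ i ≤ 2k−1, and N(a_{2k},b_{2k},a₀,b₀) ∈ Γ; (iv) Γ has a majority polymorphism. -/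

import Mathlib

open scoped NNRat ENNReal

/-- A cost function of some arity over domain `D`, taking values in `ℝ≥0 ∪ {∞}`. -/
abbrev CFun (D : Type) : Type := Σ k : ℕ, (Fin k → D) → ℝ≥0∞

/-- The binary crisp equality cost function. -/
noncomputable def eqC (D : Type) [DecidableEq D] : (Fin 2 → D) → ℝ≥0∞ :=
  fun x => if x 0 = x 1 then 0 else ⊤

/-- `f` is definable by a psm-formula over `Φ ∪ {eq}`: a minimisation over `k`
bound variables of a sum of `m` atomic formulas. -/
def InVClone {D : Type} [Fintype D] [DecidableEq D] (Φ : Set (CFun D)) {n : ℕ}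
    (f : (Fin n → D) → ℝ≥0∞) : Prop :=
  ∃ (k m : ℕ) (ar : Fin m → ℕ) (g : ∀ j : Fin m, (Fin (ar j) → D) → ℝ≥0∞)
    (sc : ∀ j : Fin m, Fin (ar j) → Fin (n + k)),
    (∀ j : Fin m, (⟨ar j, g j⟩ : CFun D) ∈ Φ ∨ (⟨ar j, g j⟩ : CFun D) = ⟨2, eqC D⟩) ∧
    ∀ x : Fin n → D, f x = ⨅ y : Fin k → D, ∑ j : Fin m, g j (fun i => Fin.append x y (sc j i))

/-- Weak submodularity of a valued constraint language. -/
def WeaklySubmodular {D : Type} [Fintype D] [DecidableEq D] (Φ : Set (CFun D)) : Prop :=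
  ∀ f : (Fin 2 → D) → ℝ≥0∞, InVClone Φ f → ∀ a b : D,
    f ![a, a] + f ![b, b] ≤ f ![a, b] + f ![b, a] ∨ (f ![a, a] = ⊤ ∧ f ![b, b] = ⊤)

/-- The crisp cost function `Rel(f)` underlying a cost function `f`:
value `0` where `f` is finite, `∞` elsewhere. -/
noncomputable def RelC {D : Type} {k : ℕ} (f : (Fin k → D) → ℝ≥0∞) :
    (Fin k → D) → ℝ≥0∞ :=
  fun x => if f x = ⊤ then ⊤ else 0

/-- The crisp constraint language `Rel(Φ)` underlying `Φ`. -/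
def RelSet {D : Type} (Φ : Set (CFun D)) : Set (CFun D) :=
  {g | ∃ f ∈ Φ, g = ⟨f.1, RelC f.2⟩}


/-- The crisp binary cost function representing the relation
`N(a,b,c,d) = {(a,c), (b,c), (a,d)}`. -/
noncomputable def Ncrisp {D : Type} [DecidableEq D] (a b c d : D) :
    (Fin 2 → D) → ℝ≥0∞ :=
  fun x =>
    if (x 0 = a ∧ x 1 = c) ∨ (x 0 = b ∧ x 1 = c) ∨ (x 0 = a ∧ x 1 = d) then 0 else ⊤

/-!
Suppose a relation `R` of the clone and a tuple `t` form a minimal counterexample to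
2-decomposability: `t` agrees with a member of `R` on every proper subset of a set `P` of at least
three coordinates but not on `P`. Changing `t` at three coordinates of `P`, one at a time, and
restricting `R` to the values that occur, gives a ternary relation inside a `2 × 2 × 2` box which
misses one tuple and contains its three neighbours. Fixing one coordinate of this relation leaves
an `N`-relation or a matching. Three `N`-relations form an odd cycle of length three, a mixture of
`N`-relations and matchings composes to some `N(a,b,a,b)`, and three matchings yield the parity
relation or again an `N`-relation.

If none of these occurs, every relation of the clone is determined by its binary projections. The
ternary polymorphisms form such a relation, indexed by `D × D × D`, and on any two triples with
a repeated entry one of the three projections is a majority, so a majority polymorphism exists.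
-/

open scoped SetRel

/-- A relational clone on `D`, with relations of any finite index type `ι` as subsets of `ι → D`.
Precomposition with `σ` renames and identifies variables. Taking its preimage adds dummy variables;
taking its image quantifies variables existentially and, for non-injective `σ`, adds equality
constraints. -/
structure RelationalClone (D : Type) where
  rels (ι : Type) [Finite ι] : Set (Set (ι → D))
  finiteInter (ι : Type) [Finite ι] : FiniteInter (rels ι)
  preimage_mem {ι κ : Type} [Finite ι] [Finite κ] (σ : ι → κ) {R : Set (ι → D)} :
    R ∈ rels ι → (· ∘ σ) ⁻¹' R ∈ rels κ
  image_mem {ι κ : Type} [Finite ι] [Finite κ] (σ : ι → κ) {R : Set (κ → D)} :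
    R ∈ rels κ → (· ∘ σ) '' R ∈ rels ι

section SpecialRelations

variable {D : Type*}

/-- The relation `N(a,b,c,d)`. -/
def nRel (a b c d : D) : SetRel D D := {(a, c), (b, c), (a, d)}

/-- The graph of the partial map `a ↦ c`, `b ↦ d`; together with `nRel` these are the only shapes
of two-valued binary relations that matter for the classification. -/
def matchRel (a b c d : D) : SetRel D D := {(a, c), (b, d)}

/-- The relation `x + y + z = 0` on `{a, b}`, identified with `ZMod 2` by `a ↦ 0`, `b ↦ 1`. -/
def parityRel (a b : D) : Set (D × D × D) := {(a, a, a), (a, b, b), (b, a, b), (b, b, a)}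

@[simp]
theorem mem_nRel {a b c d x y : D} :
    (x, y) ∈ nRel a b c d ↔ x = a ∧ y = c ∨ x = b ∧ y = c ∨ x = a ∧ y = d := by
  simp [nRel]

@[simp]
theorem mem_matchRel {a b c d x y : D} :
    (x, y) ∈ matchRel a b c d ↔ x = a ∧ y = c ∨ x = b ∧ y = d := by
  simp [matchRel]

theorem nRel_inv (a b c d : D) : (nRel a b c d).inv = nRel c d a b := by
  ext ⟨x, y⟩
  simp only [SetRel.mem_inv, mem_nRel]
  tauto

theorem matchRel_inv (a b c d : D) : (matchRel a b c d).inv = matchRel c d a b := by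
  ext ⟨x, y⟩
  simp only [SetRel.mem_inv, mem_matchRel]
  tauto

theorem matchRel_swap (a b c d : D) : matchRel a b c d = matchRel b a d c :=
  Set.pair_comm _ _

theorem nRel_comp_matchRel {c d : D} (hcd : c ≠ d) (a b e f : D) :
    nRel a b c d ○ matchRel c d e f = nRel a b e f := by
  ext ⟨x, y⟩
  simp only [SetRel.mem_comp, mem_nRel, mem_matchRel, or_and_right, and_assoc, exists_or,
    exists_and_left, exists_eq_left, hcd, hcd.symm]
  tauto

theorem nRel_comp_nRel {c d : D} (hcd : c ≠ d) (a b e f : D) :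
    nRel a b c d ○ nRel d c e f = nRel a b e f := by
  ext ⟨x, y⟩
  simp only [SetRel.mem_comp, mem_nRel, or_and_right, and_assoc, exists_or,
    exists_and_left, exists_eq_left, hcd, hcd.symm]
  tauto

theorem eq_nRel_or_eq_matchRel {r : SetRel D D} {a b c d : D}
    (hr : r ⊆ ({a, b} : Set D) ×ˢ ({c, d} : Set D))
    (had : (a, d) ∈ r) (hbc : (b, c) ∈ r) (hbd : (b, d) ∉ r) :
    r = nRel a b c d ∨ r = matchRel a b d c := by
  have hr' : ∀ {x y}, (x, y) ∈ r → (x = a ∨ x = b) ∧ (y = c ∨ y = d) := fun hxy => hr hxy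
  by_cases hac : (a, c) ∈ r
  · left
    ext ⟨x, y⟩
    grind [mem_nRel]
  · right
    ext ⟨x, y⟩
    grind [mem_matchRel]

theorem eq_or_eq_of_matchRel_sections {a b c d e f : D} (hab : a ≠ b) (hcd : c ≠ d) (hef : e ≠ f)
    {t : Set (D × D × D)}
    (htsub : t ⊆ ({a, b} : Set D) ×ˢ ({c, d} : Set D) ×ˢ ({e, f} : Set D))
    (h₁₂ : {p : D × D | (p.1, p.2, f) ∈ t} = matchRel a b d c)
    (h₁₃ : {p : D × D | (p.1, d, p.2) ∈ t} = matchRel a b f e)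
    (h₂₃ : {p : D × D | (b, p.1, p.2) ∈ t} = matchRel c d f e) :
    t = {(a, c, e), (a, d, f), (b, c, f), (b, d, e)} ∨ t = {(a, d, f), (b, c, f), (b, d, e)} := by
  have hbox : ∀ {x y z}, (x, y, z) ∈ t → (x = a ∨ x = b) ∧ (y = c ∨ y = d) ∧ (z = e ∨ z = f) :=
    fun hxyz => htsub hxyz
  have hf : ∀ {x y}, (x, y, f) ∈ t ↔ x = a ∧ y = d ∨ x = b ∧ y = c :=
    fun {x y} => (Set.ext_iff.1 h₁₂ (x, y)).trans mem_matchRel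
  have hd : ∀ {x z}, (x, d, z) ∈ t ↔ x = a ∧ z = f ∨ x = b ∧ z = e :=
    fun {x z} => (Set.ext_iff.1 h₁₃ (x, z)).trans mem_matchRel
  have hb : ∀ {y z}, (b, y, z) ∈ t ↔ y = c ∧ z = f ∨ y = d ∧ z = e :=
    fun {y z} => (Set.ext_iff.1 h₂₃ (y, z)).trans mem_matchRel
  by_cases hace : (a, c, e) ∈ t
  · left
    ext ⟨x, y, z⟩
    simp only [Set.mem_insert_iff, Set.mem_singleton_iff, Prod.mk.injEq]
    grind
  · right
    ext ⟨x, y, z⟩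
    simp only [Set.mem_insert_iff, Set.mem_singleton_iff, Prod.mk.injEq]
    grind

end SpecialRelations

section Majority

variable {D : Type*}

/-- `ρ` is a majority operation. -/
def IsMajority (ρ : D → D → D → D) : Prop :=
  ∀ a b, ρ a a b = a ∧ ρ a b a = a ∧ ρ b a a = a

/-- The repeated entry of a triple; meaningless for triples of distinct entries. -/
def majorityValue [DecidableEq D] (q : D × D × D) : D :=
  if q.1 = q.2.1 then q.1 else q.2.2

variable [DecidableEq D] (a b : D)

theorem majorityValue_fst_snd : majorityValue (a, a, b) = a := by simp [majorityValue]

theorem majorityValue_fst_thd : majorityValue (a, b, a) = a := by simp [majorityValue]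

theorem majorityValue_snd_thd : majorityValue (b, a, a) = a := by
  simp +contextual [majorityValue]

end Majority

namespace RelationalClone

variable {D : Type} {ι : Type} [Finite ι] {C : RelationalClone D}

theorem inter_mem {R S : Set (ι → D)} (hR : R ∈ C.rels ι) (hS : S ∈ C.rels ι) :
    R ∩ S ∈ C.rels ι :=
  (C.finiteInter ι).inter_mem hR hS

theorem sInter_mem {F : Set (Set (ι → D))} (hF : F.Finite) (hFC : F ⊆ C.rels ι) :
    ⋂₀ F ∈ C.rels ι := by
  simpa using (C.finiteInter ι).finiteInter_mem hF.toFinset (by simpa using hFC)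

/-- The clone contains every unary relation. -/
def Conservative (C : RelationalClone D) : Prop :=
  ∀ S : Set D, {x : Fin 1 → D | x 0 ∈ S} ∈ C.rels (Fin 1)

theorem Conservative.setOf_mem (hC : C.Conservative) (S : Set D) (i : ι) :
    {x : ι → D | x i ∈ S} ∈ C.rels ι :=
  C.preimage_mem (fun _ => i) (hC S)

theorem Conservative.pi_mem (hC : C.Conservative) (P : Set ι) (S : ι → Set D) :
    P.pi S ∈ C.rels ι := by
  have hpi : P.pi S = ⋂₀ ((fun i => {x | x i ∈ S i}) '' P) := by
    ext x
    simp [Set.mem_pi]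
  rw [hpi]
  refine sInter_mem (P.toFinite.image _) ?_
  rintro _ ⟨i, -, rfl⟩
  exact hC.setOf_mem (S i) i

/-- The clone contains the binary relation `r`. -/
def HasBinary (C : RelationalClone D) (r : SetRel D D) : Prop :=
  {x : Fin 2 → D | (x 0, x 1) ∈ r} ∈ C.rels (Fin 2)

/-- The clone contains the ternary relation `t`. -/
def HasTernary (C : RelationalClone D) (t : Set (D × D × D)) : Prop :=
  {x : Fin 3 → D | (x 0, x 1, x 2) ∈ t} ∈ C.rels (Fin 3)

theorem HasBinary.setOf_mem {r : SetRel D D} (h : C.HasBinary r) (i j : ι) :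
    {x : ι → D | (x i, x j) ∈ r} ∈ C.rels ι :=
  C.preimage_mem ![i, j] h

theorem HasTernary.setOf_mem {t : Set (D × D × D)} (h : C.HasTernary t) (i j k : ι) :
    {x : ι → D | (x i, x j, x k) ∈ t} ∈ C.rels ι :=
  C.preimage_mem ![i, j, k] h

theorem hasBinary_image {R : Set (ι → D)} (hR : R ∈ C.rels ι) (i j : ι) :
    C.HasBinary ((fun x => (x i, x j)) '' R) := by
  have himage : {x : Fin 2 → D | (x 0, x 1) ∈ (fun x => (x i, x j)) '' R} =
      (· ∘ ![i, j]) '' R := by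
    ext x
    simp [funext_iff, Fin.forall_fin_succ]
  simpa only [HasBinary, himage] using C.image_mem ![i, j] hR

theorem hasTernary_image {R : Set (ι → D)} (hR : R ∈ C.rels ι) (i j k : ι) :
    C.HasTernary ((fun x => (x i, x j, x k)) '' R) := by
  have himage : {x : Fin 3 → D | (x 0, x 1, x 2) ∈ (fun x => (x i, x j, x k)) '' R} =
      (· ∘ ![i, j, k]) '' R := by
    ext x
    simp [funext_iff, Fin.forall_fin_succ]
  simpa only [HasTernary, himage] using C.image_mem ![i, j, k] hR

theorem HasBinary.inv {r : SetRel D D} (h : C.HasBinary r) : C.HasBinary r.inv :=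
  h.setOf_mem 1 0

theorem HasBinary.comp {r s : SetRel D D} (hr : C.HasBinary r) (hs : C.HasBinary s) :
    C.HasBinary (r ○ s) := by
  convert hasBinary_image (inter_mem (hr.setOf_mem (0 : Fin 3) 1) (hs.setOf_mem 1 2)) 0 2
  ext ⟨x, z⟩
  constructor
  · rintro ⟨y, hxy, hyz⟩
    exact ⟨![x, y, z], ⟨hxy, hyz⟩, rfl⟩
  · rintro ⟨v, ⟨hxy, hyz⟩, hv⟩
    cases hv
    exact ⟨v 1, hxy, hyz⟩

theorem HasTernary.comp {t : Set (D × D × D)} {r s : SetRel D D} (ht : C.HasTernary t)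
    (hr : C.HasBinary r) (hs : C.HasBinary s) :
    C.HasTernary {p | ∃ y z, (p.1, y, z) ∈ t ∧ (y, p.2.1) ∈ r ∧ (z, p.2.2) ∈ s} := by
  convert hasTernary_image (inter_mem (ht.setOf_mem (0 : Fin 5) 1 2)
    (inter_mem (hr.setOf_mem 1 3) (hs.setOf_mem 2 4))) 0 3 4
  ext ⟨x, y', z'⟩
  constructor
  · rintro ⟨y, z, hxyz, hy, hz⟩
    exact ⟨![x, y, z, y', z'], ⟨hxyz, hy, hz⟩, rfl⟩
  · rintro ⟨v, ⟨hxyz, hy, hz⟩, hv⟩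
    cases hv
    exact ⟨v 1, v 2, hxyz, hy, hz⟩

theorem HasTernary.image_fst_snd {t : Set (D × D × D)} (ht : C.HasTernary t) :
    C.HasBinary ((fun p => (p.1, p.2.1)) '' t) := by
  convert hasBinary_image ht 0 1
  ext ⟨x, y⟩
  constructor
  · rintro ⟨p, hp, hxy⟩
    exact ⟨![p.1, p.2.1, p.2.2], hp, hxy⟩
  · rintro ⟨v, hv, hxy⟩
    exact ⟨_, hv, hxy⟩

theorem HasTernary.section_thd (hC : C.Conservative) {t : Set (D × D × D)}
    (ht : C.HasTernary t) (c : D) : C.HasBinary {p | (p.1, p.2, c) ∈ t} := by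
  convert hasBinary_image (inter_mem ht (hC.setOf_mem {c} 2)) 0 1
  ext ⟨x, y⟩
  constructor
  · intro hxy
    exact ⟨![x, y, c], ⟨hxy, rfl⟩, rfl⟩
  · rintro ⟨v, ⟨hxy, rfl⟩, hv⟩
    cases hv
    exact hxy

theorem HasTernary.section_snd (hC : C.Conservative) {t : Set (D × D × D)}
    (ht : C.HasTernary t) (c : D) : C.HasBinary {p | (p.1, c, p.2) ∈ t} :=
  section_thd (t := {p | (p.1, p.2.2, p.2.1) ∈ t}) hC (ht.setOf_mem 0 2 1) c

theorem HasTernary.section_fst (hC : C.Conservative) {t : Set (D × D × D)}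
    (ht : C.HasTernary t) (c : D) : C.HasBinary {p | (c, p.1, p.2) ∈ t} :=
  section_thd (t := {p | (p.2.2, p.1, p.2.1) ∈ t}) hC (ht.setOf_mem 2 0 1) c

section Obstructions

variable {a b c d e f : D}

theorem HasBinary.nRel_symm (h : C.HasBinary (nRel a b c d)) : C.HasBinary (nRel c d a b) :=
  nRel_inv a b c d ▸ h.inv

theorem HasBinary.matchRel_symm (h : C.HasBinary (matchRel a b c d)) :
    C.HasBinary (matchRel c d a b) :=
  matchRel_inv a b c d ▸ h.inv

theorem HasBinary.nRel_trans_matchRel (hcd : c ≠ d) (h₁ : C.HasBinary (nRel a b c d))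
    (h₂ : C.HasBinary (matchRel c d e f)) : C.HasBinary (nRel a b e f) :=
  nRel_comp_matchRel hcd a b e f ▸ h₁.comp h₂

theorem HasBinary.nRel_trans_nRel (hcd : c ≠ d) (h₁ : C.HasBinary (nRel a b c d))
    (h₂ : C.HasBinary (nRel d c e f)) : C.HasBinary (nRel a b e f) :=
  nRel_comp_nRel hcd a b e f ▸ h₁.comp h₂

/-- The alternatives to a majority polymorphism. Odd cycles of length three suffice. -/
inductive Obstruction (C : RelationalClone D) : Prop
  | loop {a b : D} (hab : a ≠ b) (h : C.HasBinary (nRel a b a b))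
  | parity {a b : D} (hab : a ≠ b) (h : C.HasTernary (parityRel a b))
  | triangle {a b c d e f : D} (hab : a ≠ b) (hcd : c ≠ d) (hef : e ≠ f)
      (h₁ : C.HasBinary (nRel a b c d)) (h₂ : C.HasBinary (nRel c d e f))
      (h₃ : C.HasBinary (nRel e f a b))

theorem Obstruction.of_nRel_nRel_matchRel (hab : a ≠ b) (hcd : c ≠ d) (hef : e ≠ f)
    (h₁ : C.HasBinary (nRel a b c d)) (h₂ : C.HasBinary (nRel a b e f))
    (h₃ : C.HasBinary (matchRel c d f e)) : C.Obstruction :=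
  .loop hab ((h₁.nRel_trans_matchRel hcd h₃).nRel_trans_nRel hef.symm h₂.nRel_symm)

theorem Obstruction.of_nRel_matchRel_matchRel (hab : a ≠ b) (hcd : c ≠ d) (hef : e ≠ f)
    (h₁ : C.HasBinary (nRel a b c d)) (h₂ : C.HasBinary (matchRel a b e f))
    (h₃ : C.HasBinary (matchRel c d e f)) : C.Obstruction :=
  .loop hab ((h₁.nRel_trans_matchRel hcd h₃).nRel_trans_matchRel hef h₂.matchRel_symm)

theorem HasTernary.parityRel_of_matchRel (hcd : c ≠ d) (hef : e ≠ f)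
    (ht : C.HasTernary {(a, c, e), (a, d, f), (b, c, f), (b, d, e)})
    (h₂ : C.HasBinary (matchRel d c a b)) (h₃ : C.HasBinary (matchRel f e a b)) :
    C.HasTernary (parityRel a b) := by
  convert ht.comp h₂ h₃
  ext ⟨x, y, z⟩
  simp only [parityRel, Set.mem_insert_iff, Set.mem_singleton_iff, Prod.mk.injEq, mem_matchRel,
    Set.mem_ofPred_eq]
  constructor
  · rintro (⟨rfl, rfl, rfl⟩ | ⟨rfl, rfl, rfl⟩ | ⟨rfl, rfl, rfl⟩ | ⟨rfl, rfl, rfl⟩)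
    exacts [⟨d, f, by simp⟩, ⟨c, e, by simp⟩, ⟨d, e, by simp⟩, ⟨c, f, by simp⟩]
  · rintro ⟨y, z, _⟩
    grind

theorem Obstruction.of_matchRel_sections (hC : C.Conservative) (hab : a ≠ b) (hcd : c ≠ d)
    (hef : e ≠ f) {t : Set (D × D × D)} (ht : C.HasTernary t)
    (htsub : t ⊆ ({a, b} : Set D) ×ˢ ({c, d} : Set D) ×ˢ ({e, f} : Set D))
    (h₁₂ : {p : D × D | (p.1, p.2, f) ∈ t} = matchRel a b d c)
    (h₁₃ : {p : D × D | (p.1, d, p.2) ∈ t} = matchRel a b f e)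
    (h₂₃ : {p : D × D | (b, p.1, p.2) ∈ t} = matchRel c d f e) : C.Obstruction := by
  have hm₁₂ := h₁₂ ▸ ht.section_thd hC f
  have hm₁₃ := h₁₃ ▸ ht.section_snd hC d
  have hm₂₃ := h₂₃ ▸ ht.section_fst hC b
  rcases eq_or_eq_of_matchRel_sections hab hcd hef htsub h₁₂ h₁₃ h₂₃ with rfl | rfl
  · exact .parity hab (ht.parityRel_of_matchRel hcd hef hm₁₂.matchRel_symm hm₁₃.matchRel_symm)
  · have hn : C.HasBinary (nRel b a d c) := by
      convert ht.image_fst_snd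
      ext ⟨x, y⟩
      simp only [mem_nRel, Set.mem_image, Set.mem_insert_iff, Set.mem_singleton_iff]
      grind
    rw [matchRel_swap] at hm₁₃ hm₂₃
    exact .of_nRel_matchRel_matchRel hab.symm hcd.symm hef hn hm₁₃ hm₂₃

theorem Obstruction.of_ternary (hC : C.Conservative) (hab : a ≠ b) (hcd : c ≠ d) (hef : e ≠ f)
    {t : Set (D × D × D)} (ht : C.HasTernary t)
    (htsub : t ⊆ ({a, b} : Set D) ×ˢ ({c, d} : Set D) ×ˢ ({e, f} : Set D))
    (hadf : (a, d, f) ∈ t) (hbcf : (b, c, f) ∈ t) (hbde : (b, d, e) ∈ t) (hbdf : (b, d, f) ∉ t) :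
    C.Obstruction := by
  have h₁₂ := ht.section_thd hC f
  have h₁₃ := ht.section_snd hC d
  have h₂₃ := ht.section_fst hC b
  have hcases₁₂ := eq_nRel_or_eq_matchRel (r := {p | (p.1, p.2, f) ∈ t})
    (fun p hp => ⟨(htsub hp).1, (htsub hp).2.1⟩) hadf hbcf hbdf
  have hcases₁₃ := eq_nRel_or_eq_matchRel (r := {p | (p.1, d, p.2) ∈ t})
    (fun p hp => ⟨(htsub hp).1, (htsub hp).2.2⟩) hadf hbde hbdf
  have hcases₂₃ := eq_nRel_or_eq_matchRel (r := {p | (b, p.1, p.2) ∈ t})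
    (fun p hp => (htsub hp).2) hbcf hbde hbdf
  rcases hcases₁₂ with e₁₂ | e₁₂ <;> rcases hcases₁₃ with e₁₃ | e₁₃ <;>
    rcases hcases₂₃ with e₂₃ | e₂₃ <;> rw [e₁₂] at h₁₂ <;> rw [e₁₃] at h₁₃ <;> rw [e₂₃] at h₂₃
  · exact .triangle hab hcd hef h₁₂ h₂₃ h₁₃.nRel_symm
  · exact .of_nRel_nRel_matchRel hab hcd hef h₁₂ h₁₃ h₂₃
  · exact .of_nRel_nRel_matchRel hcd hab hef h₁₂.nRel_symm h₂₃ h₁₃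
  · exact .of_nRel_matchRel_matchRel hab hcd hef.symm h₁₂ h₁₃ h₂₃
  · exact .of_nRel_nRel_matchRel hef hab hcd h₁₃.nRel_symm h₂₃.nRel_symm h₁₂
  · exact .of_nRel_matchRel_matchRel hab hef hcd.symm h₁₃ h₁₂
      (matchRel_swap e f d c ▸ h₂₃.matchRel_symm)
  · exact .of_nRel_matchRel_matchRel hcd hef hab.symm h₂₃
      (matchRel_swap c d b a ▸ h₁₂.matchRel_symm) (matchRel_swap e f b a ▸ h₁₃.matchRel_symm)
  · exact .of_matchRel_sections hC hab hcd hef ht htsub e₁₂ e₁₃ e₂₃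

end Obstructions

theorem Obstruction.of_minimal_failure (hC : C.Conservative) {R : Set (ι → D)}
    (hR : R ∈ C.rels ι) {P : Set ι} {t r₁ r₂ r₃ : ι → D} {i j k : ι}
    (hi : i ∈ P) (hj : j ∈ P) (hk : k ∈ P) (hij : i ≠ j) (hik : i ≠ k) (hjk : j ≠ k)
    (hr₁ : r₁ ∈ R) (hr₂ : r₂ ∈ R) (hr₃ : r₃ ∈ R)
    (h₁ : Set.EqOn r₁ t (P \ {i})) (h₂ : Set.EqOn r₂ t (P \ {j})) (h₃ : Set.EqOn r₃ t (P \ {k}))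
    (hP : ∀ r ∈ R, ¬ Set.EqOn r t P) : C.Obstruction := by
  have hne {r : ι → D} {l : ι} (hr : r ∈ R) (hrt : Set.EqOn r t (P \ {l})) : r l ≠ t l :=
    fun hl => hP r hr fun p hp => by
      by_cases hpl : p = l
      · rwa [hpl]
      · exact hrt ⟨hp, hpl⟩
  let box : ι → Set D := fun p => {t p, r₁ p, r₂ p, r₃ p}
  have hT := hasTernary_image (inter_mem hR (hC.pi_mem P box)) i j k
  have hvals {r : ι → D} (hr : r ∈ P.pi box) {p : ι} (hp : p ∈ P) :
      r p = t p ∨ r p = r₁ p ∧ p = i ∨ r p = r₂ p ∧ p = j ∨ r p = r₃ p ∧ p = k := by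
    have hrp : r p = t p ∨ r p = r₁ p ∨ r p = r₂ p ∨ r p = r₃ p := hr p hp
    have h₁p := @h₁ p
    have h₂p := @h₂ p
    have h₃p := @h₃ p
    grind
  refine .of_ternary hC (hne hr₁ h₁) (hne hr₂ h₂) (hne hr₃ h₃) hT ?_ ?_ ?_ ?_ ?_
  · rintro _ ⟨r, ⟨-, hr⟩, rfl⟩
    have hri := hvals hr hi
    have hrj := hvals hr hj
    have hrk := hvals hr hk
    simp only [Set.mem_prod, Set.mem_insert_iff, Set.mem_singleton_iff]
    grind
  · exact ⟨r₁, ⟨hr₁, fun p _ => by simp [box]⟩, by simp [h₁ ⟨hj, hij.symm⟩, h₁ ⟨hk, hik.symm⟩]⟩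
  · exact ⟨r₂, ⟨hr₂, fun p _ => by simp [box]⟩, by simp [h₂ ⟨hi, hij⟩, h₂ ⟨hk, hjk.symm⟩]⟩
  · exact ⟨r₃, ⟨hr₃, fun p _ => by simp [box]⟩, by simp [h₃ ⟨hi, hik⟩, h₃ ⟨hj, hjk⟩]⟩
  · rintro ⟨r, ⟨hrR, hr⟩, hrt⟩
    simp only [Prod.mk.injEq] at hrt
    refine hP r hrR fun p hp => ?_
    have := hvals hr hp
    grind

theorem exists_mem_eqOn_of_card_le_two (hC : C.Conservative) (hO : ¬ C.Obstruction)
    {R : Set (ι → D)} (hR : R ∈ C.rels ι) {t : ι → D} (P : Finset ι)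
    (hP : ∀ Q ⊆ P, Q.card ≤ 2 → ∃ r ∈ R, Set.EqOn r t Q) : ∃ r ∈ R, Set.EqOn r t P := by
  classical
  induction P using Finset.strongInduction with
  | H P ih =>
    by_cases hcard : P.card ≤ 2
    · exact hP P subset_rfl hcard
    by_contra! hfail
    have herase : ∀ i ∈ P, ∃ r ∈ R, Set.EqOn r t (P \ {i}) := fun i hi => by
      simpa using ih (P.erase i) (Finset.erase_ssubset hi)
        fun Q hQ => hP Q (hQ.trans (P.erase_subset i))
    obtain ⟨i, hi, j, hj, k, hk, hij, hik, hjk⟩ := Finset.two_lt_card.1 (not_le.1 hcard)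
    obtain ⟨r₁, hr₁, h₁⟩ := herase i hi
    obtain ⟨r₂, hr₂, h₂⟩ := herase j hj
    obtain ⟨r₃, hr₃, h₃⟩ := herase k hk
    exact hO (.of_minimal_failure hC hR hi hj hk hij hik hjk hr₁ hr₂ hr₃ h₁ h₂ h₃ hfail)

/-- `ρ` is a ternary polymorphism of every relation of the clone. -/
def Preserves (C : RelationalClone D) (ρ : D → D → D → D) : Prop :=
  ∀ {ι : Type} [Finite ι], ∀ R ∈ C.rels ι, ∀ x ∈ R, ∀ y ∈ R, ∀ z ∈ R,
    (fun i => ρ (x i) (y i) (z i)) ∈ R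

/-- The smallest relation of the clone that contains the three projections, viewed as ternary
operations on `D`. -/
def ternaryOps (C : RelationalClone D) [Finite D] : Set (D × D × D → D) :=
  ⋂₀ {S ∈ C.rels (D × D × D) | (fun q => q.1) ∈ S ∧ (fun q => q.2.1) ∈ S ∧ (fun q => q.2.2) ∈ S}

variable [Finite D]

theorem ternaryOps_mem : C.ternaryOps ∈ C.rels (D × D × D) :=
  sInter_mem (Set.toFinite _) fun _ hS => hS.1

theorem apply_mem_of_mem_ternaryOps {r : D × D × D → D} (hr : r ∈ C.ternaryOps) {R : Set (ι → D)}
    (hR : R ∈ C.rels ι) {x y z : ι → D} (hx : x ∈ R) (hy : y ∈ R) (hz : z ∈ R) :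
    (fun i => r (x i, y i, z i)) ∈ R :=
  hr _ ⟨C.preimage_mem (fun i => (x i, y i, z i)) hR, hx, hy, hz⟩

theorem exists_mem_ternaryOps_eqOn_majorityValue [DecidableEq D] {Q : Finset (D × D × D)}
    (hQ : ∀ q ∈ Q, q.1 = q.2.1 ∨ q.1 = q.2.2 ∨ q.2.1 = q.2.2) (hcard : Q.card ≤ 2) :
    ∃ r ∈ C.ternaryOps, Set.EqOn r majorityValue Q := by
  by_contra! hfail
  have hdisagree {r} (hr : r ∈ C.ternaryOps) : ∃ q ∈ Q, r q ≠ majorityValue q := by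
    simpa [Set.EqOn] using hfail r hr
  obtain ⟨q₁, hq₁, h₁⟩ := hdisagree fun _ hS => hS.2.1
  obtain ⟨q₂, hq₂, h₂⟩ := hdisagree fun _ hS => hS.2.2.1
  obtain ⟨q₃, hq₃, h₃⟩ := hdisagree fun _ hS => hS.2.2.2
  -- At a triple with two equal entries at most one projection misses the majority value.
  have hdistinct : q₁ ≠ q₂ ∧ q₁ ≠ q₃ ∧ q₂ ≠ q₃ := by grind [majorityValue]
  exact hcard.not_gt (Finset.two_lt_card.2 ⟨q₁, hq₁, q₂, hq₂, q₃, hq₃, hdistinct⟩)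

theorem Conservative.exists_majority (hC : C.Conservative) (hO : ¬ C.Obstruction) :
    ∃ ρ, IsMajority ρ ∧ C.Preserves ρ := by
  classical
  have := Fintype.ofFinite D
  let P : Finset (D × D × D) := {q | q.1 = q.2.1 ∨ q.1 = q.2.2 ∨ q.2.1 = q.2.2}
  have hP {q} : q ∈ P ↔ q.1 = q.2.1 ∨ q.1 = q.2.2 ∨ q.2.1 = q.2.2 := by simp [P]
  obtain ⟨r, hr, hrP⟩ := exists_mem_eqOn_of_card_le_two hC hO ternaryOps_mem P
    fun Q hQ => exists_mem_ternaryOps_eqOn_majorityValue fun q hq => hP.1 (hQ hq)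
  refine ⟨fun a b c => r (a, b, c), fun a b => ⟨?_, ?_, ?_⟩, fun R hR x hx y hy z hz =>
    apply_mem_of_mem_ternaryOps hr hR hx hy hz⟩
  · exact (hrP (x := (a, a, b)) (hP.2 (by simp))).trans (majorityValue_fst_snd a b)
  · exact (hrP (x := (a, b, a)) (hP.2 (by simp))).trans (majorityValue_fst_thd a b)
  · exact (hrP (x := (b, a, a)) (hP.2 (by simp))).trans (majorityValue_snd_thd a b)

end RelationalClone

section Feasibility

variable {D ι κ : Type}

theorem exists_sum_fun_iff {p : (ι ⊕ κ → D) → Prop} :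
    (∃ z, p z) ↔ ∃ x y, p (Sum.elim x y) :=
  ⟨fun ⟨z, hz⟩ => ⟨z ∘ .inl, z ∘ .inr, by rwa [Sum.elim_comp_inl_inr]⟩,
    fun ⟨_, _, h⟩ => ⟨_, h⟩⟩

variable [DecidableEq D]

/-- An atomic formula over `Φ ∪ {eq}` with variables in `ι`. -/
structure PsmAtom (Φ : Set (CFun D)) (ι : Type) where
  cost : CFun D
  cost_mem : cost ∈ Φ ∨ cost = ⟨2, eqC D⟩
  scope : Fin cost.1 → ι

variable {Φ : Set (CFun D)}

namespace PsmAtom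

/-- The assignment `x` gives the atom a finite cost. -/
def Holds (A : PsmAtom Φ ι) (x : ι → D) : Prop :=
  A.cost.2 (x ∘ A.scope) ≠ ⊤

/-- Renaming of the variables of an atom. -/
def map (σ : ι → κ) (A : PsmAtom Φ ι) : PsmAtom Φ κ :=
  ⟨A.cost, A.cost_mem, σ ∘ A.scope⟩

/-- The atomic formula `eq(i, j)`. -/
noncomputable def eq (i j : ι) : PsmAtom Φ ι :=
  ⟨⟨2, eqC D⟩, .inr rfl, ![i, j]⟩

@[simp]
theorem holds_map {σ : ι → κ} {A : PsmAtom Φ ι} {x : κ → D} :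
    (A.map σ).Holds x ↔ A.Holds (x ∘ σ) :=
  Iff.rfl

@[simp]
theorem holds_eq {i j : ι} {x : ι → D} : (PsmAtom.eq i j : PsmAtom Φ ι).Holds x ↔ x i = x j := by
  simp [Holds, eq, eqC]

end PsmAtom

/-- `R` is the set of assignments of finite cost of a psm-formula over `Φ ∪ {eq}` with free
variables `ι`, bound variables `κ`, and atoms indexed by `J`. -/
def IsFeasibilityRel (Φ : Set (CFun D)) (R : Set (ι → D)) : Prop :=
  ∃ (κ J : Type) (_ : Finite κ) (_ : Finite J) (A : J → PsmAtom Φ (ι ⊕ κ)),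
    ∀ x, x ∈ R ↔ ∃ y : κ → D, ∀ j, (A j).Holds (Sum.elim x y)

namespace IsFeasibilityRel

theorem univ : IsFeasibilityRel Φ (Set.univ : Set (ι → D)) :=
  ⟨Empty, Empty, inferInstance, inferInstance, Empty.elim, by simp⟩

theorem inter {R S : Set (ι → D)} (hR : IsFeasibilityRel Φ R) (hS : IsFeasibilityRel Φ S) :
    IsFeasibilityRel Φ (R ∩ S) := by
  obtain ⟨κ, J, _, _, A, hA⟩ := hR
  obtain ⟨κ', J', _, _, A', hA'⟩ := hS
  refine ⟨κ ⊕ κ', J ⊕ J', inferInstance, inferInstance,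
    Sum.elim (fun j => (A j).map (Sum.map id .inl)) (fun j => (A' j).map (Sum.map id .inr)),
    fun x => ?_⟩
  simp [hA, hA', exists_sum_fun_iff, Sum.elim_comp_map]

theorem preimage (σ : ι → κ) {R : Set (ι → D)} (hR : IsFeasibilityRel Φ R) :
    IsFeasibilityRel Φ ((· ∘ σ) ⁻¹' R) := by
  obtain ⟨μ, J, _, _, A, hA⟩ := hR
  refine ⟨μ, J, inferInstance, inferInstance, fun j => (A j).map (Sum.map σ id), fun x => ?_⟩
  simp [hA, Sum.elim_comp_map]

theorem image [Finite ι] [Finite κ] (σ : ι → κ) {R : Set (κ → D)} (hR : IsFeasibilityRel Φ R) :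
    IsFeasibilityRel Φ ((· ∘ σ) '' R) := by
  obtain ⟨μ, J, _, _, A, hA⟩ := hR
  refine ⟨κ ⊕ μ, J ⊕ ι, inferInstance, inferInstance,
    Sum.elim (fun j => (A j).map .inr) (fun i => .eq (.inr (.inl (σ i))) (.inl i)), fun x => ?_⟩
  simp [hA, exists_sum_fun_iff, funext_iff]

variable [Fintype D] {n : ℕ}

theorem of_inVClone {f : (Fin n → D) → ℝ≥0∞} (hf : InVClone Φ f) :
    IsFeasibilityRel Φ {x | f x ≠ ⊤} := by
  obtain ⟨k, m, ar, g, sc, hg, hfg⟩ := hf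
  refine ⟨Fin k, Fin m, inferInstance, inferInstance,
    fun j => ⟨⟨ar j, g j⟩, hg j, finSumFinEquiv.symm ∘ sc j⟩, fun x => ?_⟩
  have happend (y : Fin k → D) : Sum.elim x y ∘ finSumFinEquiv.symm = Fin.append x y := by
    rw [Equiv.comp_symm_eq]
    exact (Fin.append_comp_sumElim).symm
  simp only [Set.mem_ofPred_eq, hfg, ne_eq, iInf_eq_top, not_forall, PsmAtom.Holds,
    ← Function.comp_assoc, happend]
  simp only [← ne_eq, ENNReal.sum_ne_top, Finset.mem_univ, true_imp_iff]
  rfl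

theorem exists_inVClone {R : Set (Fin n → D)} (hR : IsFeasibilityRel Φ R) :
    ∃ f, InVClone Φ f ∧ ∀ x, f x ≠ ⊤ ↔ x ∈ R := by
  obtain ⟨κ, J, _, _, A, hA⟩ := hR
  obtain ⟨k, ⟨eκ⟩⟩ := Finite.exists_equiv_fin κ
  obtain ⟨m, ⟨eJ⟩⟩ := Finite.exists_equiv_fin J
  let v : Fin n ⊕ κ → Fin (n + k) := Sum.elim (Fin.castAdd k) (Fin.natAdd n ∘ eκ)
  refine ⟨_, ⟨k, m, fun j => (A (eJ.symm j)).cost.1, fun j => (A (eJ.symm j)).cost.2,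
    fun j => v ∘ (A (eJ.symm j)).scope, fun j => (A (eJ.symm j)).cost_mem, fun _ => rfl⟩,
    fun x => ?_⟩
  have happend (y : Fin k → D) : Fin.append x y ∘ v = Sum.elim x (y ∘ eκ) := by
    ext (_ | _) <;> simp [v]
  have hsum (y : Fin k → D) :
      ∑ j, (A (eJ.symm j)).cost.2 (Fin.append x y ∘ v ∘ (A (eJ.symm j)).scope) ≠ ⊤ ↔
        ∀ j, (A j).Holds (Sum.elim x (y ∘ eκ)) := by
    simp only [ENNReal.sum_ne_top, Finset.mem_univ, true_imp_iff, ← Function.comp_assoc, happend]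
    exact eJ.symm.forall_congr fun _ => Iff.rfl
  rw [hA, ne_eq, iInf_eq_top, not_forall]
  exact (eκ.symm.arrowCongr (.refl D)).exists_congr hsum

theorem exists_relC_eq {p : (Fin n → D) → Prop} [DecidablePred p]
    (hp : IsFeasibilityRel Φ {x | p x}) :
    ∃ f, InVClone Φ f ∧ (fun x => if p x then (0 : ℝ≥0∞) else ⊤) = RelC f := by
  obtain ⟨f, hf, hfp⟩ := hp.exists_inVClone
  refine ⟨f, hf, funext fun x => ?_⟩
  by_cases hx : p x
  · rw [RelC, if_pos hx, if_neg ((hfp x).2 hx)]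
  · rw [RelC, if_neg hx, if_pos (not_not.1 (mt (hfp x).1 hx))]

end IsFeasibilityRel

/-- The relational clone `Rel(⟨Φ⟩_v)`. -/
def feasibilityClone (Φ : Set (CFun D)) : RelationalClone D where
  rels _ _ := {R | IsFeasibilityRel Φ R}
  finiteInter _ _ := ⟨.univ, fun _ hR _ hS => hR.inter hS⟩
  preimage_mem σ _ hR := hR.preimage σ
  image_mem σ _ hR := hR.image σ

variable [Fintype D]

theorem setOf_relC_ne_top_mem_feasibilityClone {n : ℕ} {f : (Fin n → D) → ℝ≥0∞}
    (hf : InVClone Φ f) : {x | RelC f x ≠ ⊤} ∈ (feasibilityClone Φ).rels (Fin n) := by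
  have hset : {x | RelC f x ≠ ⊤} = {x | f x ≠ ⊤} := by simp [RelC]
  exact hset ▸ IsFeasibilityRel.of_inVClone hf

theorem feasibilityClone_conservative
    (hΦ : ∀ S : Finset D, ∃ f : (Fin 1 → D) → ℝ≥0∞,
      InVClone Φ f ∧ (fun x => if x 0 ∈ S then 0 else ⊤) = RelC f) :
    (feasibilityClone Φ).Conservative := by
  intro S
  obtain ⟨f, hf, hSf⟩ := hΦ S.toFinite.toFinset
  simpa [← hSf] using setOf_relC_ne_top_mem_feasibilityClone hf

theorem exists_ncrisp_eq_relC {a b c d : D}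
    (h : (feasibilityClone Φ).HasBinary (nRel a b c d)) :
    ∃ f, InVClone Φ f ∧ Ncrisp a b c d = RelC f := by
  simp only [RelationalClone.HasBinary, mem_nRel] at h
  exact IsFeasibilityRel.exists_relC_eq h

theorem exists_parity_eq_relC {a b : D} (h : (feasibilityClone Φ).HasTernary (parityRel a b)) :
    ∃ f, InVClone Φ f ∧
      (fun x : Fin 3 → D =>
        if x = ![a, a, a] ∨ x = ![a, b, b] ∨ x = ![b, a, b] ∨ x = ![b, b, a]
        then (0 : ℝ≥0∞) else ⊤) = RelC f := by
  have hset : {x : Fin 3 → D | (x 0, x 1, x 2) ∈ parityRel a b} =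
      {x | x = ![a, a, a] ∨ x = ![a, b, b] ∨ x = ![b, a, b] ∨ x = ![b, b, a]} := by
    ext x
    simp [parityRel, funext_iff, Fin.forall_fin_succ]
  rw [RelationalClone.HasTernary, hset] at h
  exact IsFeasibilityRel.exists_relC_eq h

end Feasibility

/-- Takhanov. Let `Γ = Rel(⟨Φ⟩_v)` be a conservative
relational clone. Then (i) some `N(a,b,a,b) ∈ Γ` with `a ≠ b`, or (ii) some
relation `{(a,a,a),(a,b,b),(b,a,b),(b,b,a)} ∈ Γ` with `a ≠ b`, or (iii) there is
an odd cycle `N(aᵢ,bᵢ,a_{i+1},b_{i+1}) ∈ Γ` (indices mod `2k+1`) with `aᵢ ≠ bᵢ`,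
or (iv) `Γ` has a majority polymorphism. -/
theorem takhanov_classification
    {D : Type} [Fintype D] [DecidableEq D] (hD : 2 ≤ Fintype.card D)
    (Φ : Set (CFun D)) (Γ : Set (CFun D))
    (hΓ : ∀ (k : ℕ) (g : (Fin k → D) → ℝ≥0∞),
      (⟨k, g⟩ : CFun D) ∈ Γ ↔ ∃ f : (Fin k → D) → ℝ≥0∞, InVClone Φ f ∧ g = RelC f)
    (hcons : ∀ S : Finset D,
      (⟨1, fun x => if x 0 ∈ S then (0 : ℝ≥0∞) else ⊤⟩ : CFun D) ∈ Γ) :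
    (∃ a b : D, a ≠ b ∧ (⟨2, Ncrisp a b a b⟩ : CFun D) ∈ Γ) ∨
    (∃ a b : D, a ≠ b ∧
      (⟨3, fun x : Fin 3 → D =>
        if x = ![a, a, a] ∨ x = ![a, b, b] ∨ x = ![b, a, b] ∨ x = ![b, b, a]
        then (0 : ℝ≥0∞) else ⊤⟩ : CFun D) ∈ Γ) ∨
    (∃ k : ℕ, 1 ≤ k ∧ ∃ a b : Fin (2 * k + 1) → D,
      (∀ i, a i ≠ b i) ∧
      ∀ i : Fin (2 * k + 1),
        (⟨2, Ncrisp (a i) (b i) (a (i + 1)) (b (i + 1))⟩ : CFun D) ∈ Γ) ∨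
    (∃ ρ : D → D → D → D,
      (∀ a b : D, ρ a a b = a ∧ ρ a b a = a ∧ ρ b a a = a) ∧
      ∀ g ∈ Γ, ∀ x y z : Fin g.1 → D,
        g.2 x ≠ ⊤ → g.2 y ≠ ⊤ → g.2 z ≠ ⊤ →
          g.2 (fun i => ρ (x i) (y i) (z i)) ≠ ⊤) := by
  have hC : (feasibilityClone Φ).Conservative :=
    feasibilityClone_conservative fun S => (hΓ 1 _).1 (hcons S)
  have hN {a b c d : D} (h : (feasibilityClone Φ).HasBinary (nRel a b c d)) :
      (⟨2, Ncrisp a b c d⟩ : CFun D) ∈ Γ := (hΓ 2 _).2 (exists_ncrisp_eq_relC h)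
  by_cases hO : (feasibilityClone Φ).Obstruction
  · rcases hO with @⟨a, b, hab, h⟩ | @⟨a, b, hab, h⟩ |
      @⟨a, b, c, d, e, f, hab, hcd, hef, hac, hce, hea⟩
    · exact .inl ⟨a, b, hab, hN h⟩
    · exact .inr (.inl ⟨a, b, hab, (hΓ 3 _).2 (exists_parity_eq_relC h)⟩)
    · refine .inr (.inr (.inl ⟨1, le_rfl, ![a, c, e], ![b, d, f], ?_, ?_⟩))
      · exact Fin.forall_fin_succ.2 ⟨hab, Fin.forall_fin_two.2 ⟨hcd, hef⟩⟩
      · exact Fin.forall_fin_succ.2 ⟨hN hac, Fin.forall_fin_two.2 ⟨hN hce, hN hea⟩⟩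
  · obtain ⟨ρ, hmaj, hpres⟩ := hC.exists_majority hO
    refine .inr (.inr (.inr ⟨ρ, hmaj, ?_⟩))
    rintro ⟨n, g⟩ hg x y z hx hy hz
    obtain ⟨f, hf, rfl⟩ := (hΓ n g).1 hg
    exact hpres _ (setOf_relC_ne_top_mem_feasibilityClone hf) x hx y hy z hz
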